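/- Let k > 0 be real, let J ≥ 0 be an integer, and let f : [0,k] → ℝ be nonnegative, concave, and piecewise linear with exactly J+1 linear pieces: there are breakpoints 0 = b_0 < b_1 < … < b_J < b_{J+1} = k such that f is affine with slope m_t on [b_{t−1}, b_t] for t = 1,…,J+1 and m_1 > m_2 > … > m_{J+1}. Set z_0 = f(0)/k, z_k = f(k)/k, and a_j = (m_j − m_{j+1})/k for j = 1,…,J. Then z_0 ≥ 0, z_k ≥ 0, a_j > 0 for all j, and f(x) = z_0·(k−x) + z_k·x + Σ_{j=1}^J a_j·min(x·(k−b_j), (k−x)·b_j) for all x ∈ [0,k]; that is, f is the continuous extension of the k-CG function of order J with these parameters. -/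

import Mathlib

/-!
Subtracting from `m 1 * (x - b 0)` one hinge `(m j - m (j + 1)) * max (x - b j) 0` per interior
breakpoint makes the slope drop from `m j` to `m (j + 1)` at `b j`, so `f` is `f (b 0)` plus this
hinge sum. On the interval `[l, r]`, the gadget `min ((x - l) * (r - c)) ((r - x) * (c - l))` is
the hinge `-(r - l) * max (x - c) 0` plus a linear term making it vanish at both ends. Replacing
hinges by gadgets therefore changes the hinge sum by an affine function only, and that function is
determined by the two boundary values of `f`.
-/

open Finset

section OrderedRing

variable {R : Type*} [CommRing R] [LinearOrder R] {f : R → R} {b m : ℕ → R} {n : ℕ} {x y : R}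

/-- `f` is piecewise affine on `[b 0, b (n + 1)]` with breakpoints `b 0, …, b (n + 1)`. Slopes are
numbered from `1`: the piece `[b t, b (t + 1)]` has slope `m (t + 1)`. -/
def IsPiecewiseAffine (f : R → R) (b m : ℕ → R) (n : ℕ) : Prop :=
  ∀ t ≤ n, ∀ x ∈ Set.Icc (b t) (b (t + 1)), f x = f (b t) + m (t + 1) * (x - b t)

/-- The combination of hinge functions that vanishes at `b 0`, starts with slope `m 1`, and
changes slope from `m j` to `m (j + 1)` at `b j` for `1 ≤ j ≤ n`. -/
def hingeSum (b m : ℕ → R) (n : ℕ) (x : R) : R :=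
  m 1 * (x - b 0) - ∑ j ∈ Icc 1 n, (m j - m (j + 1)) * max (x - b j) 0

lemma hingeSum_zero (b m : ℕ → R) (x : R) : hingeSum b m 0 x = m 1 * (x - b 0) := by
  simp [hingeSum]

lemma hingeSum_succ (b m : ℕ → R) (n : ℕ) (x : R) :
    hingeSum b m (n + 1) x =
      hingeSum b m n x - (m (n + 1) - m (n + 2)) * max (x - b (n + 1)) 0 := by
  rw [hingeSum, hingeSum, sum_Icc_succ_top (by lia), sub_sub]

variable [IsOrderedRing R]

lemma hingeSum_succ_of_le (hx : x ≤ b (n + 1)) :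
    hingeSum b m (n + 1) x = hingeSum b m n x := by
  rw [hingeSum_succ, max_eq_right (sub_nonpos.2 hx), mul_zero, sub_zero]

lemma hingeSum_sub_hingeSum (hx : ∀ j ∈ Icc 1 n, b j ≤ x) (hy : ∀ j ∈ Icc 1 n, b j ≤ y) :
    hingeSum b m n x - hingeSum b m n y = m (n + 1) * (x - y) := by
  induction n with
  | zero => rw [hingeSum_zero, hingeSum_zero]; ring
  | succ n ih =>
    have hsub : Icc 1 n ⊆ Icc 1 (n + 1) := Icc_subset_Icc_right n.le_succ
    have hmem : n + 1 ∈ Icc 1 (n + 1) := right_mem_Icc.2 (by lia)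
    rw [hingeSum_succ, hingeSum_succ, max_eq_left (sub_nonneg.2 (hx _ hmem)),
      max_eq_left (sub_nonneg.2 (hy _ hmem))]
    linear_combination ih (fun j hj => hx j (hsub hj)) (fun j hj => hy j (hsub hj))

theorem IsPiecewiseAffine.eq_add_hingeSum (hf : IsPiecewiseAffine f b m n)
    (hb : MonotoneOn b (Set.Iic (n + 1))) (hx : x ∈ Set.Icc (b 0) (b (n + 1))) :
    f x = f (b 0) + hingeSum b m n x := by
  induction n generalizing x with
  | zero => rw [hingeSum_zero, hf 0 le_rfl x hx]
  | succ n ih =>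
    have eq_of_le : ∀ y ∈ Set.Icc (b 0) (b (n + 1)),
        f y = f (b 0) + hingeSum b m (n + 1) y := fun y hy => by
      rw [hingeSum_succ_of_le hy.2]
      exact ih (fun t ht => hf t (by lia)) (hb.mono (Set.Iic_subset_Iic.2 (by lia))) hy
    rcases le_total x (b (n + 1)) with hle | hge
    · exact eq_of_le x ⟨hx.1, hle⟩
    · have knots_le : ∀ j ≤ n + 1, b j ≤ b (n + 1) := fun j hj =>
        hb (hj.trans (n + 1).le_succ) (n + 1).le_succ hj
      have at_knot : f (b (n + 1)) = f (b 0) + hingeSum b m (n + 1) (b (n + 1)) :=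
        eq_of_le _ ⟨knots_le 0 (Nat.zero_le _), le_rfl⟩
      have slope : hingeSum b m (n + 1) x - hingeSum b m (n + 1) (b (n + 1)) =
          m (n + 2) * (x - b (n + 1)) :=
        hingeSum_sub_hingeSum (fun j hj => (knots_le j (mem_Icc.1 hj).2).trans hge)
          (fun j hj => knots_le j (mem_Icc.1 hj).2)
      linear_combination hf (n + 1) le_rfl x ⟨hge, hx.2⟩ + at_knot - slope

lemma min_mul_sub_mul_sub_eq {l r : R} (hlr : l ≤ r) (c x : R) :
    min ((x - l) * (r - c)) ((r - x) * (c - l)) =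
      (x - l) * (r - c) - (r - l) * max (x - c) 0 :=
  calc min ((x - l) * (r - c)) ((r - x) * (c - l))
    _ = min ((x - l) * (r - c) - (r - l) * 0) ((x - l) * (r - c) - (r - l) * (x - c)) := by
      congr 1 <;> ring
    _ = (x - l) * (r - c) - (r - l) * max (x - c) 0 := by
      rw [min_sub_sub_left, ← mul_max_of_nonneg _ _ (sub_nonneg.2 hlr), max_comm]

lemma sub_mul_hingeSum {r : R} (h0 : b 0 ≤ r) (hr : ∀ j ∈ Icc 1 n, b j ≤ r) (x : R) :
    (r - b 0) * hingeSum b m n x = (x - b 0) * hingeSum b m n r +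
      ∑ j ∈ Icc 1 n, (m j - m (j + 1)) *
        min ((x - b 0) * (r - b j)) ((r - x) * (b j - b 0)) := by
  have gadgets_eq : ∑ j ∈ Icc 1 n, (m j - m (j + 1)) *
        min ((x - b 0) * (r - b j)) ((r - x) * (b j - b 0)) =
      (x - b 0) * ∑ j ∈ Icc 1 n, (m j - m (j + 1)) * max (r - b j) 0 -
        (r - b 0) * ∑ j ∈ Icc 1 n, (m j - m (j + 1)) * max (x - b j) 0 := by
    rw [mul_sum, mul_sum, ← sum_sub_distrib]
    refine sum_congr rfl fun j hj => ?_
    rw [min_mul_sub_mul_sub_eq h0, max_eq_left (sub_nonneg.2 (hr j hj))]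
    ring
  rw [gadgets_eq, hingeSum, hingeSum]
  ring

theorem IsPiecewiseAffine.sub_mul_eq_sum_min (hf : IsPiecewiseAffine f b m n)
    (hb : MonotoneOn b (Set.Iic (n + 1))) (hx : x ∈ Set.Icc (b 0) (b (n + 1))) :
    (b (n + 1) - b 0) * f x = f (b 0) * (b (n + 1) - x) + f (b (n + 1)) * (x - b 0) +
      ∑ j ∈ Icc 1 n, (m j - m (j + 1)) *
        min ((x - b 0) * (b (n + 1) - b j)) ((b (n + 1) - x) * (b j - b 0)) := by
  have knots_le : ∀ j ≤ n + 1, b j ≤ b (n + 1) := fun j hj => hb hj Set.self_mem_Iic hj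
  have h0 : b 0 ≤ b (n + 1) := knots_le 0 (Nat.zero_le _)
  have at_x : f x = f (b 0) + hingeSum b m n x := hf.eq_add_hingeSum hb hx
  have at_end : f (b (n + 1)) = f (b 0) + hingeSum b m n (b (n + 1)) :=
    hf.eq_add_hingeSum hb (Set.right_mem_Icc.2 h0)
  have hinges := sub_mul_hingeSum (m := m) h0
    (fun j hj => knots_le j ((mem_Icc.1 hj).2.trans n.le_succ)) x
  linear_combination (b (n + 1) - b 0) * at_x - (x - b 0) * at_end + hinges

end OrderedRing

theorem piecewise_linear_is_cg_extension_general {𝕜 : Type*} [Field 𝕜] [LinearOrder 𝕜]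
    [IsStrictOrderedRing 𝕜] {k : 𝕜} (hk : 0 < k) {J : ℕ} {f : 𝕜 → 𝕜} {b m : ℕ → 𝕜}
    (hf0 : 0 ≤ f 0) (hfk : 0 ≤ f k) (hb0 : b 0 = 0) (hbtop : b (J + 1) = k)
    (hb : MonotoneOn b (Set.Iic (J + 1))) (hf : IsPiecewiseAffine f b m J)
    (hm : ∀ t, 1 ≤ t → t ≤ J → m (t + 1) < m t) :
    0 ≤ f 0 / k ∧ 0 ≤ f k / k ∧
    (∀ j ∈ Icc 1 J, 0 < (m j - m (j + 1)) / k) ∧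
    (∀ x ∈ Set.Icc 0 k,
      f x = (f 0 / k) * (k - x) + (f k / k) * x
        + ∑ j ∈ Icc 1 J, ((m j - m (j + 1)) / k)
            * min (x * (k - b j)) ((k - x) * b j)) := by
  refine ⟨div_nonneg hf0 hk.le, div_nonneg hfk hk.le, fun j hj => ?_, fun x hx => ?_⟩
  · exact div_pos (sub_pos.2 (hm j (mem_Icc.1 hj).1 (mem_Icc.1 hj).2)) hk
  · have scaled := hf.sub_mul_eq_sum_min hb (x := x) (by rwa [hb0, hbtop])
    simp only [hb0, hbtop, sub_zero] at scaled
    simp only [div_mul_eq_mul_div, ← sum_div, ← add_div]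
    rw [← scaled, mul_div_cancel_left₀ _ hk.ne']

/-- **Every admissible piecewise linear function is the continuous extension of a `k`-CG
function (Lemma B.3).** Let `k > 0`, `J ≥ 0`, and let `f : [0,k] → ℝ` be nonnegative,
concave, and piecewise linear with exactly `J+1` linear pieces: breakpoints
`0 = b_0 < b_1 < … < b_J < b_{J+1} = k`, slope `m_t` on `[b_{t-1}, b_t]` for
`t = 1,…,J+1`, and `m_1 > m_2 > … > m_{J+1}`. Setting `z₀ = f(0)/k`, `z_k = f(k)/k`, and
`a_j = (m_j - m_{j+1})/k`, we have `z₀, z_k ≥ 0`, `a_j > 0`, and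
`f(x) = z₀(k-x) + z_k·x + ∑_{j=1}^J a_j·min(x(k-b_j), (k-x)b_j)` for all `x ∈ [0,k]`. -/
theorem piecewise_linear_is_cg_extension
    (k : ℝ) (hk : 0 < k) (J : ℕ)
    (f : ℝ → ℝ) (b m : ℕ → ℝ)
    (hnn : ∀ x ∈ Set.Icc 0 k, 0 ≤ f x)
    (hconc : ConcaveOn ℝ (Set.Icc 0 k) f)
    (hb0 : b 0 = 0) (hbtop : b (J + 1) = k)
    (hbmono : ∀ t, t ≤ J → b t < b (t + 1))
    (haffine : ∀ t ∈ Finset.Icc 1 (J + 1), ∀ x ∈ Set.Icc (b (t - 1)) (b t),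
      f x = f (b (t - 1)) + m t * (x - b (t - 1)))
    (hmdec : ∀ t, 1 ≤ t → t ≤ J → m (t + 1) < m t) :
    0 ≤ f 0 / k ∧ 0 ≤ f k / k ∧
    (∀ j ∈ Finset.Icc 1 J, 0 < (m j - m (j + 1)) / k) ∧
    (∀ x ∈ Set.Icc 0 k,
      f x = (f 0 / k) * (k - x) + (f k / k) * x
        + ∑ j ∈ Finset.Icc 1 J, ((m j - m (j + 1)) / k)
            * min (x * (k - b j)) ((k - x) * b j)) := by
  have hb : MonotoneOn b (Set.Iic (J + 1)) :=
    monotoneOn_of_le_succ Set.ordConnected_Iic fun t _ _ ht =>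
      (hbmono t (Nat.le_of_succ_le_succ ht)).le
  have hf : IsPiecewiseAffine f b m J := fun t ht => haffine (t + 1) (by simpa using ht)
  exact piecewise_linear_is_cg_extension_general hk (hnn 0 ⟨le_rfl, hk.le⟩)
    (hnn k ⟨hk.le, le_rfl⟩) hb0 hbtop hb hf hmdec
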